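/- Let γ > 0, m ≥ 1, and let w : ℝ² → ℝ^m be a smooth map satisfying −Δw = γ²(1 − ‖w‖²)w on ℝ² (componentwise Laplacian), with finite energy ∫_{ℝ²} [½|∇w|² + γ²(1 − ‖w‖²)²] dx < ∞, where |∇w|² = Σ_{i,j} (∂_i w_j)². Then w is constant. -/

import Mathlib

open MeasureTheory

noncomputable section

/-- Standard basis vectors of `ℝ²`. -/
def E2 (i : Fin 2) : EuclideanSpace ℝ (Fin 2) := EuclideanSpace.single i 1

/-- Componentwise Laplacian of a map `ℝ² → ℝ^m`. -/
def lap2m (m : ℕ) (w : EuclideanSpace ℝ (Fin 2) → EuclideanSpace ℝ (Fin m))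
    (x : EuclideanSpace ℝ (Fin 2)) : EuclideanSpace ℝ (Fin m) :=
  ∑ i : Fin 2, fderiv ℝ (fun y => fderiv ℝ w y (E2 i)) x (E2 i)

/-- `|∇w|² = Σ_{i,j} (∂_i w_j)²` for a map `ℝ² → ℝ^m`. -/
def gradSq2m (m : ℕ) (w : EuclideanSpace ℝ (Fin 2) → EuclideanSpace ℝ (Fin m))
    (x : EuclideanSpace ℝ (Fin 2)) : ℝ :=
  ∑ i : Fin 2, ∑ j : Fin m, (fderiv ℝ w x (E2 i) j) ^ 2

/-!
The stress-energy tensor `T = ∇w ⊗ ∇w - (|∇w|² / 2 + V(w)) I` of a solution of `Δw = ∇V(w)` is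
divergence free, and it is integrable when the energy is finite. An integrable divergence-free
field `X` has mean zero: testing `div X = 0` against `p (c x) / c`, where `p` has compact support
and agrees with a linear form `ℓ` near `0`, and letting `c → 0` gives `∫ ℓ(X) = 0`. Taking the
trace of `∫ T = 0` yields the Pohozaev identity `(n - 2) ∫ |∇w|² + 2 n ∫ V(w) = 0`, so `V(w) = 0`
for `V ≥ 0` and `n ≥ 2`. For the Ginzburg–Landau potential this says `‖w‖ = 1`, whence `Δw = 0`,
and `0 = Δ‖w‖² = 2 (|∇w|² + ⟨w, Δw⟩)` leaves `∇w = 0`.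
-/

open Filter InnerProductSpace Laplacian Module Topology

section Divergence

variable {E : Type*} [NormedAddCommGroup E] [NormedSpace ℝ E]

/-- The divergence `div X = tr (DX)` of a vector field on a finite-dimensional space, written as a
trace so that no basis has to be chosen. Its value is `0` where `X` is not differentiable. -/
def divergence (X : E → E) (x : E) : ℝ :=
  LinearMap.trace ℝ E (fderiv ℝ X x)

lemma divergence_sub {X Y : E → E} {x : E}
    (hX : DifferentiableAt ℝ X x) (hY : DifferentiableAt ℝ Y x) :
    divergence (fun y => X y - Y y) x = divergence X x - divergence Y x := by
  simp [divergence, fderiv_fun_sub hX hY]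

lemma divergence_fun_sum {ι : Type*} {s : Finset ι} {X : ι → E → E} {x : E}
    (hX : ∀ i ∈ s, DifferentiableAt ℝ (X i) x) :
    divergence (fun y => ∑ i ∈ s, X i y) x = ∑ i ∈ s, divergence (X i) x := by
  simp [divergence, fderiv_fun_sum hX]

variable [FiniteDimensional ℝ E]

lemma divergence_smul {g : E → ℝ} {X : E → E} {x : E}
    (hg : DifferentiableAt ℝ g x) (hX : DifferentiableAt ℝ X x) :
    divergence (fun y => g y • X y) x = g x * divergence X x + fderiv ℝ g x (X x) := by
  have htrace := LinearMap.trace_smulRight (fderiv ℝ g x : E →ₗ[ℝ] ℝ) (X x)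
  simp [divergence, fderiv_fun_smul hg hX, htrace]

lemma divergence_smul_const {g : E → ℝ} {x : E} (hg : DifferentiableAt ℝ g x) (v : E) :
    divergence (fun y => g y • v) x = fderiv ℝ g x v := by
  simpa [divergence] using divergence_smul hg (differentiableAt_const v)

lemma continuous_divergence {X : E → E} (hX : ContDiff ℝ 1 X) : Continuous (divergence X) :=
  (LinearMap.trace ℝ E ∘ₗ ContinuousLinearMap.coeLM ℝ).continuous_of_finiteDimensional.comp
    (hX.continuous_fderiv one_ne_zero)

lemma exists_hasCompactSupport_fderiv_zero_eq (ℓ : E →L[ℝ] ℝ) :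
    ∃ p : E → ℝ, ContDiff ℝ 1 p ∧ HasCompactSupport p ∧ fderiv ℝ p 0 = ℓ := by
  let χ : ContDiffBump (0 : E) := ⟨1, 2, one_pos, one_lt_two⟩
  refine ⟨fun x => χ x * ℓ x, χ.contDiff.mul ℓ.contDiff, χ.hasCompactSupport.mul_right, ?_⟩
  have hℓ : (fun x => χ x * ℓ x) =ᶠ[𝓝 0] ℓ := by
    filter_upwards [χ.eventuallyEq_one] with x hx
    simp [hx]
  rw [hℓ.fderiv_eq, ContinuousLinearMap.fderiv]

variable [MeasurableSpace E] [BorelSpace E] {μ : Measure E} [μ.IsAddHaarMeasure]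

lemma integral_fderiv_eq_zero {F : Type*} [NormedAddCommGroup F] [NormedSpace ℝ F]
    {f : E → F} (hf : ContDiff ℝ 1 f) (hf_supp : HasCompactSupport f) :
    ∫ x, fderiv ℝ f x ∂μ = 0 := by
  have hint : Integrable (fderiv ℝ f) μ :=
    (hf.continuous_fderiv one_ne_zero).integrable_of_hasCompactSupport (hf_supp.fderiv ℝ)
  ext v
  rw [ContinuousLinearMap.integral_apply hint]
  simpa using integral_smul_fderiv_eq_neg_fderiv_smul_of_integrable (μ := μ)
    (f := fun _ => (1 : ℝ)) (g := f) (v := v) (by simp)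
    (by simpa using hint.apply_continuousLinearMap v)
    (by simpa using hf.continuous.integrable_of_hasCompactSupport hf_supp)
    (fun _ _ => differentiableAt_const _) (fun x _ => hf.differentiable one_ne_zero x)

lemma integral_divergence_eq_zero {X : E → E} (hX : ContDiff ℝ 1 X)
    (hX_supp : HasCompactSupport X) : ∫ x, divergence X x ∂μ = 0 := by
  let traceL : (E →L[ℝ] E) →L[ℝ] ℝ :=
    (LinearMap.trace ℝ E ∘ₗ ContinuousLinearMap.coeLM ℝ).toContinuousLinearMap
  have hint : Integrable (fderiv ℝ X) μ :=
    (hX.continuous_fderiv one_ne_zero).integrable_of_hasCompactSupport (hX_supp.fderiv ℝ)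
  calc ∫ x, divergence X x ∂μ = traceL (∫ x, fderiv ℝ X x ∂μ) := traceL.integral_comp_comm hint
    _ = 0 := by rw [integral_fderiv_eq_zero hX hX_supp, map_zero]

lemma integral_fderiv_apply_eq_neg_integral_mul_divergence {g : E → ℝ} {X : E → E}
    (hg : ContDiff ℝ 1 g) (hg_supp : HasCompactSupport g) (hX : ContDiff ℝ 1 X) :
    ∫ x, fderiv ℝ g x (X x) ∂μ = -∫ x, g x * divergence X x ∂μ := by
  have hderiv : Integrable (fun x => fderiv ℝ g x (X x)) μ := by
    refine ((hg.continuous_fderiv one_ne_zero).clm_apply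
      hX.continuous).integrable_of_hasCompactSupport ((hg_supp.fderiv ℝ).mono fun x hx => ?_)
    contrapose! hx
    simp_all
  have hdiv : Integrable (fun x => g x * divergence X x) μ :=
    (hg.continuous.mul (continuous_divergence hX)).integrable_of_hasCompactSupport
      hg_supp.mul_right
  have hzero : ∫ x, divergence (fun y => g y • X y) x ∂μ = 0 :=
    integral_divergence_eq_zero (hg.smul hX) hg_supp.smul_right
  simp_rw [divergence_smul (hg.differentiable one_ne_zero _)
    (hX.differentiable one_ne_zero _)] at hzero
  rw [integral_add hdiv hderiv] at hzero
  linarith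

theorem integral_eq_zero_of_divergence_eq_zero {X : E → E} (hX : ContDiff ℝ 1 X)
    (hX_int : Integrable X μ) (hX_div : ∀ x, divergence X x = 0) : ∫ x, X x ∂μ = 0 := by
  refine SeparatingDual.eq_zero_of_forall_dual_eq_zero (R := ℝ) fun ℓ => ?_
  obtain ⟨p, hp, hp_supp, hp_zero⟩ := exists_hasCompactSupport_fderiv_zero_eq ℓ
  have hp_cont : Continuous (fderiv ℝ p) := hp.continuous_fderiv one_ne_zero
  obtain ⟨C, hC⟩ := (hp_supp.fderiv ℝ).exists_bound_of_continuous hp_cont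
  let c : ℕ → ℝ := fun n => 1 / ((n : ℝ) + 1)
  -- Test against `x ↦ p (c x)` and divide by `c`; then let `c → 0`.
  have hscaled : ∀ n, ∫ x, fderiv ℝ p (c n • x) (X x) ∂μ = 0 := by
    intro n
    have hc : c n ≠ 0 := by positivity
    have htest := integral_fderiv_apply_eq_neg_integral_mul_divergence (μ := μ)
      (hp.comp (contDiff_const_smul (c n))) (hp_supp.comp_smul hc) hX
    simpa [Function.comp_def, fderiv_comp_smul, hX_div, integral_const_mul, hc] using htest
  have hlim : Tendsto (fun n => ∫ x, fderiv ℝ p (c n • x) (X x) ∂μ) atTop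
      (𝓝 (∫ x, ℓ (X x) ∂μ)) := by
    refine tendsto_integral_of_dominated_convergence (fun x => C * ‖X x‖)
      (fun n => ((hp_cont.comp (continuous_const_smul (c n))).clm_apply
        hX.continuous).aestronglyMeasurable) (hX_int.norm.const_mul C)
      (fun n => .of_forall fun x => (fderiv ℝ p (c n • x)).le_of_opNorm_le (hC _) (X x))
      (.of_forall fun x => ?_)
    have hc : Tendsto (fun n => c n • x) atTop (𝓝 0) := by
      simpa [c] using (tendsto_one_div_add_atTop_nhds_zero_nat (𝕜 := ℝ)).smul_const x
    simpa [Function.comp_def, hp_zero] using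
      ((hp_cont.clm_apply (continuous_const (y := X x))).tendsto 0).comp hc
  simp_rw [hscaled] at hlim
  rw [← ℓ.integral_comp_comm hX_int]
  exact tendsto_nhds_unique hlim tendsto_const_nhds

end Divergence

section SecondDerivative

variable {E F : Type*} [NormedAddCommGroup E] [NormedSpace ℝ E] [NormedAddCommGroup F]

lemma hasFDerivAt_fderiv_apply [NormedSpace ℝ F] {w : E → F} (hw : ContDiff ℝ 2 w) (v x : E) :
    HasFDerivAt (fun y => fderiv ℝ w y v) ((fderiv ℝ (fderiv ℝ w) x).flip v) x := by
  have hDw : ContDiff ℝ 1 (fderiv ℝ w) := hw.fderiv_right (by norm_num)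
  simpa using (hDw.differentiable one_ne_zero x).hasFDerivAt.clm_apply (hasFDerivAt_const v x)

lemma fderiv_inner_fderiv_apply [InnerProductSpace ℝ F] {w : E → F} (hw : ContDiff ℝ 2 w)
    (u v x y : E) :
    fderiv ℝ (fun z => ⟪fderiv ℝ w z u, fderiv ℝ w z v⟫_ℝ) x y =
      ⟪fderiv ℝ w x u, fderiv ℝ (fderiv ℝ w) x y v⟫_ℝ +
        ⟪fderiv ℝ (fderiv ℝ w) x y u, fderiv ℝ w x v⟫_ℝ := by
  rw [fderiv_inner_apply ℝ (hasFDerivAt_fderiv_apply hw u x).differentiableAt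
    (hasFDerivAt_fderiv_apply hw v x).differentiableAt]
  simp [(hasFDerivAt_fderiv_apply hw _ x).fderiv]

lemma contDiff_inner_fderiv_apply [InnerProductSpace ℝ F] {w : E → F} (hw : ContDiff ℝ 2 w)
    (u v : E) :
    ContDiff ℝ 1 fun x => ⟪fderiv ℝ w x u, fderiv ℝ w x v⟫_ℝ := by
  have hDw : ContDiff ℝ 1 (fderiv ℝ w) := hw.fderiv_right (by norm_num)
  exact (hDw.clm_apply contDiff_const).inner ℝ (hDw.clm_apply contDiff_const)

end SecondDerivative

section GradNormSq

variable {E F : Type*} [NormedAddCommGroup E] [InnerProductSpace ℝ E] [FiniteDimensional ℝ E]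

section NormedSpace

variable [NormedAddCommGroup F] [NormedSpace ℝ F]

/-- The squared Hilbert–Schmidt norm `|∇w|² = ∑ i, ‖∂ᵢ w‖²` of the derivative of `w`. It may be
computed in any orthonormal basis, see `gradNormSq_eq_sum`. -/
def gradNormSq (w : E → F) (x : E) : ℝ :=
  ∑ i, ‖fderiv ℝ w x (stdOrthonormalBasis ℝ E i)‖ ^ 2

lemma gradNormSq_nonneg (w : E → F) (x : E) : 0 ≤ gradNormSq w x :=
  Finset.sum_nonneg fun _ _ => sq_nonneg _

lemma norm_fderiv_apply_le_sqrt_gradNormSq (w : E → F) (x v : E) :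
    ‖fderiv ℝ w x v‖ ≤ √(gradNormSq w x) * ‖v‖ := by
  set e := stdOrthonormalBasis ℝ E
  calc ‖fderiv ℝ w x v‖ = ‖∑ i, ⟪e i, v⟫_ℝ • fderiv ℝ w x (e i)‖ := by
        conv_lhs => rw [← e.sum_repr' v, map_sum]
        simp only [map_smul]
    _ ≤ ∑ i, ‖fderiv ℝ w x (e i)‖ * |⟪e i, v⟫_ℝ| :=
        norm_sum_le_of_le _ fun i _ => by rw [norm_smul, mul_comm, Real.norm_eq_abs]
    _ ≤ √(∑ i, ‖fderiv ℝ w x (e i)‖ ^ 2) * √(∑ i, |⟪e i, v⟫_ℝ| ^ 2) :=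
        Real.sum_mul_le_sqrt_mul_sqrt _ _ _
    _ = √(gradNormSq w x) * ‖v‖ := by
        simp only [sq_abs, e.sum_sq_inner_right, Real.sqrt_sq (norm_nonneg v), gradNormSq, e]

lemma fderiv_eq_zero_of_gradNormSq_eq_zero {w : E → F} {x : E} (h : gradNormSq w x = 0) :
    fderiv ℝ w x = 0 := by
  ext v
  simpa [h] using norm_fderiv_apply_le_sqrt_gradNormSq w x v

lemma laplacian_eq_sum_fderiv_fderiv {ι : Type*} [Fintype ι] (b : OrthonormalBasis ι ℝ E)
    (w : E → F) (x : E) : Δ w x = ∑ i, fderiv ℝ (fderiv ℝ w) x (b i) (b i) := by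
  simp [laplacian_eq_iteratedFDeriv_orthonormalBasis w b, iteratedFDeriv_two_apply]

end NormedSpace

variable [NormedAddCommGroup F] [InnerProductSpace ℝ F]

lemma gradNormSq_eq_sum {ι : Type*} [Fintype ι] (b : OrthonormalBasis ι ℝ E) (w : E → F) (x : E) :
    gradNormSq w x = ∑ i, ‖fderiv ℝ w x (b i)‖ ^ 2 := by
  let B : E →ₗ[ℝ] E →ₗ[ℝ] ℝ := (innerₗ F).compl₁₂ (fderiv ℝ w x) (fderiv ℝ w x)
  have htensor := congrArg (TensorProduct.lift B) ((canonicalCovariantTensor_eq_sum E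
    (stdOrthonormalBasis ℝ E)).symm.trans (canonicalCovariantTensor_eq_sum E b))
  simpa [B, gradNormSq] using htensor

lemma contDiff_gradNormSq {w : E → F} (hw : ContDiff ℝ 2 w) : ContDiff ℝ 1 (gradNormSq w) :=
  have hDw : ContDiff ℝ 1 (fderiv ℝ w) := hw.fderiv_right (by norm_num)
  ContDiff.sum fun _ _ => (hDw.clm_apply contDiff_const).norm_sq ℝ

lemma fderiv_gradNormSq_apply {w : E → F} (hw : ContDiff ℝ 2 w) (x u : E) :
    fderiv ℝ (gradNormSq w) x u = 2 * ∑ i, ⟪fderiv ℝ w x (stdOrthonormalBasis ℝ E i),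
      fderiv ℝ (fderiv ℝ w) x u (stdOrthonormalBasis ℝ E i)⟫_ℝ := by
  have hsum : HasFDerivAt (gradNormSq w) _ x := HasFDerivAt.fun_sum fun i _ =>
    (hasFDerivAt_fderiv_apply hw (stdOrthonormalBasis ℝ E i) x).norm_sq
  simp [hsum.fderiv, Finset.mul_sum]

lemma abs_inner_fderiv_apply_le (w : E → F) (x u v : E) :
    |⟪fderiv ℝ w x u, fderiv ℝ w x v⟫_ℝ| ≤ gradNormSq w x * (‖u‖ * ‖v‖) :=
  calc |⟪fderiv ℝ w x u, fderiv ℝ w x v⟫_ℝ|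
      ≤ ‖fderiv ℝ w x u‖ * ‖fderiv ℝ w x v‖ := abs_real_inner_le_norm _ _
    _ ≤ (√(gradNormSq w x) * ‖u‖) * (√(gradNormSq w x) * ‖v‖) := by
        gcongr <;> exact norm_fderiv_apply_le_sqrt_gradNormSq w x _
    _ = gradNormSq w x * (‖u‖ * ‖v‖) := by
        rw [mul_mul_mul_comm, Real.mul_self_sqrt (gradNormSq_nonneg w x)]

lemma laplacian_norm_sq {w : E → F} (hw : ContDiff ℝ 2 w) (x : E) :
    Δ (fun y => ‖w y‖ ^ 2) x = 2 * (gradNormSq w x + ⟪w x, Δ w x⟫_ℝ) := by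
  have hw_diff : Differentiable ℝ w := hw.differentiable two_ne_zero
  have hfirst (v y : E) :
      fderiv ℝ (fun z => ‖w z‖ ^ 2) y v = 2 * ⟪w y, fderiv ℝ w y v⟫_ℝ := by
    simp [(hw_diff y).hasFDerivAt.norm_sq.fderiv]
  have hsecond (v : E) : fderiv ℝ (fderiv ℝ fun z => ‖w z‖ ^ 2) x v v =
      2 * (‖fderiv ℝ w x v‖ ^ 2 + ⟪w x, fderiv ℝ (fderiv ℝ w) x v v⟫_ℝ) := by
    have hDw := hasFDerivAt_fderiv_apply hw v x
    calc fderiv ℝ (fderiv ℝ fun z => ‖w z‖ ^ 2) x v v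
        = fderiv ℝ (fun y => fderiv ℝ (fun z => ‖w z‖ ^ 2) y v) x v := by
          rw [(hasFDerivAt_fderiv_apply (hw.norm_sq ℝ) v x).fderiv]; rfl
      _ = fderiv ℝ (fun y => 2 * ⟪w y, fderiv ℝ w y v⟫_ℝ) x v := by simp_rw [hfirst]
      _ = _ := by
          rw [fderiv_const_mul ((hw_diff x).inner ℝ hDw.differentiableAt)]
          simp [fderiv_inner_apply ℝ (hw_diff x) hDw.differentiableAt, hDw.fderiv, add_comm]
  rw [laplacian_eq_sum_fderiv_fderiv (stdOrthonormalBasis ℝ E),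
    laplacian_eq_sum_fderiv_fderiv (stdOrthonormalBasis ℝ E), gradNormSq, inner_sum,
    ← Finset.sum_add_distrib, Finset.mul_sum]
  exact Finset.sum_congr rfl fun i _ => hsecond _

lemma gradNormSq_eq_neg_inner_laplacian {w : E → F} (hw : ContDiff ℝ 2 w) {c : ℝ}
    (hnorm : ∀ x, ‖w x‖ ^ 2 = c) (x : E) : gradNormSq w x = -⟪w x, Δ w x⟫_ℝ := by
  have hlap : Δ (fun y => ‖w y‖ ^ 2) x = 0 := by simp [hnorm, laplacian_const]
  rw [laplacian_norm_sq hw] at hlap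
  linarith

end GradNormSq

section StressEnergy

variable {E F : Type*} [NormedAddCommGroup E] [InnerProductSpace ℝ E] [FiniteDimensional ℝ E]
  [NormedAddCommGroup F] [InnerProductSpace ℝ F]

/-- The density `|∇w|² / 2 + V(w)` of the energy whose Euler–Lagrange equation is `Δw = ∇V(w)`. -/
def energyDensity (V : F → ℝ) (w : E → F) (x : E) : ℝ :=
  gradNormSq w x / 2 + V (w x)

lemma contDiff_energyDensity {V : F → ℝ} {w : E → F} (hV : ContDiff ℝ 1 V)
    (hw : ContDiff ℝ 2 w) : ContDiff ℝ 1 (energyDensity V w) :=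
  ((contDiff_gradNormSq hw).div_const 2).add (hV.comp (hw.of_le one_le_two))

lemma fderiv_energyDensity_apply {V : F → ℝ} {w : E → F} (hV : Differentiable ℝ V)
    (hw : ContDiff ℝ 2 w) (x u : E) :
    fderiv ℝ (energyDensity V w) x u =
      ∑ i, ⟪fderiv ℝ w x (stdOrthonormalBasis ℝ E i),
        fderiv ℝ (fderiv ℝ w) x u (stdOrthonormalBasis ℝ E i)⟫_ℝ +
      fderiv ℝ V (w x) (fderiv ℝ w x u) := by
  have hgrad : HasFDerivAt (gradNormSq w) (fderiv ℝ (gradNormSq w) x) x :=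
    ((contDiff_gradNormSq hw).differentiable one_ne_zero x).hasFDerivAt
  have hpot : HasFDerivAt (fun y => V (w y)) (fderiv ℝ V (w x) ∘L fderiv ℝ w x) x :=
    (hV (w x)).hasFDerivAt.comp x (hw.differentiable two_ne_zero x).hasFDerivAt
  have hsum : HasFDerivAt (energyDensity V w) _ x := (hgrad.mul_const 2⁻¹).fun_add hpot
  simp [hsum.fderiv, fderiv_gradNormSq_apply hw]

/-- The row in direction `u` of the stress-energy tensor
`T(v, u) = ⟨∂ᵥ w, ∂ᵤ w⟩ - energyDensity V w ⟨v, u⟩` of `w`, encoded as a vector field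
through the inner product, see `inner_stressEnergy`. -/
def stressEnergy (V : F → ℝ) (w : E → F) (u x : E) : E :=
  ∑ i, ⟪fderiv ℝ w x (stdOrthonormalBasis ℝ E i), fderiv ℝ w x u⟫_ℝ • stdOrthonormalBasis ℝ E i -
    energyDensity V w x • u

lemma inner_stressEnergy (V : F → ℝ) (w : E → F) (v u x : E) :
    ⟪v, stressEnergy V w u x⟫_ℝ =
      ⟪fderiv ℝ w x v, fderiv ℝ w x u⟫_ℝ - energyDensity V w x * ⟪v, u⟫_ℝ := by
  have hexpand : ⟪fderiv ℝ w x v, fderiv ℝ w x u⟫_ℝ =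
      ∑ i, ⟪fderiv ℝ w x (stdOrthonormalBasis ℝ E i), fderiv ℝ w x u⟫_ℝ *
        ⟪v, stdOrthonormalBasis ℝ E i⟫_ℝ := by
    conv_lhs => rw [← (stdOrthonormalBasis ℝ E).sum_repr' v]
    simp [sum_inner, inner_smul_left, real_inner_comm v, mul_comm]
  simp only [stressEnergy, inner_sub_right, inner_sum, inner_smul_right, hexpand]

lemma sum_inner_stressEnergy {ι : Type*} [Fintype ι] (b : OrthonormalBasis ι ℝ E)
    (V : F → ℝ) (w : E → F) (x : E) :
    ∑ i, ⟪b i, stressEnergy V w (b i) x⟫_ℝ =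
      gradNormSq w x - finrank ℝ E * energyDensity V w x := by
  simp [inner_stressEnergy, gradNormSq_eq_sum b w, finrank_eq_card_basis b.toBasis]

lemma contDiff_stressEnergy {V : F → ℝ} {w : E → F} (hV : ContDiff ℝ 1 V) (hw : ContDiff ℝ 2 w)
    (u : E) : ContDiff ℝ 1 (stressEnergy V w u) :=
  (ContDiff.sum fun _ _ => (contDiff_inner_fderiv_apply hw _ u).smul contDiff_const).sub
    ((contDiff_energyDensity hV hw).smul contDiff_const)

theorem divergence_stressEnergy {V : F → ℝ} {w : E → F} (hV : ContDiff ℝ 1 V)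
    (hw : ContDiff ℝ 2 w) (u x : E) :
    divergence (stressEnergy V w u) x =
      ⟪Δ w x, fderiv ℝ w x u⟫_ℝ - fderiv ℝ V (w x) (fderiv ℝ w x u) := by
  set e := stdOrthonormalBasis ℝ E with he
  have hflux (i) : DifferentiableAt ℝ (fun y => ⟪fderiv ℝ w y (e i), fderiv ℝ w y u⟫_ℝ) x :=
    (contDiff_inner_fderiv_apply hw _ u).differentiable one_ne_zero x
  have hdensity : DifferentiableAt ℝ (energyDensity V w) x :=
    (contDiff_energyDensity hV hw).differentiable one_ne_zero x
  have hsymm (v) : fderiv ℝ (fderiv ℝ w) x v u = fderiv ℝ (fderiv ℝ w) x u v :=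
    hw.contDiffAt.isSymmSndFDerivAt (by simp) v u
  calc divergence (stressEnergy V w u) x
      = ∑ i, fderiv ℝ (fun y => ⟪fderiv ℝ w y (e i), fderiv ℝ w y u⟫_ℝ) x (e i) -
          fderiv ℝ (energyDensity V w) x u := by
        unfold stressEnergy
        rw [divergence_sub (.fun_sum fun i _ => (hflux i).smul_const _) (hdensity.smul_const u),
          divergence_smul_const hdensity, divergence_fun_sum fun i _ => (hflux i).smul_const _]
        simp only [divergence_smul_const (hflux _), ← he]
    _ = ⟪Δ w x, fderiv ℝ w x u⟫_ℝ - fderiv ℝ V (w x) (fderiv ℝ w x u) := by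
        simp only [fderiv_inner_fderiv_apply hw, hsymm,
          fderiv_energyDensity_apply (hV.differentiable one_ne_zero) hw,
          laplacian_eq_sum_fderiv_fderiv e, sum_inner, Finset.sum_add_distrib, ← he]
        ring

variable [MeasurableSpace E] [BorelSpace E] {μ : Measure E} {V : F → ℝ} {w : E → F}

lemma integrable_stressEnergy (hw : ContDiff ℝ 1 w)
    (hgrad_int : Integrable (gradNormSq w) μ) (hpot_int : Integrable (fun x => V (w x)) μ) (u : E) :
    Integrable (stressEnergy V w u) μ := by
  have hDw : Continuous (fderiv ℝ w) := hw.continuous_fderiv one_ne_zero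
  have hflux (v : E) : Integrable (fun x => ⟪fderiv ℝ w x v, fderiv ℝ w x u⟫_ℝ) μ :=
    (hgrad_int.mul_const (‖v‖ * ‖u‖)).mono'
      ((hDw.clm_apply continuous_const).inner
        (hDw.clm_apply continuous_const)).aestronglyMeasurable
      (.of_forall fun x => abs_inner_fderiv_apply_le w x v u)
  exact (integrable_finsetSum _ fun _ _ => (hflux _).smul_const _).sub
    (((hgrad_int.div_const 2).add hpot_int).smul_const u)

variable [μ.IsAddHaarMeasure]

theorem pohozaev_identity (hV : ContDiff ℝ 1 V) (hw : ContDiff ℝ 2 w)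
    (hEL : ∀ x v, ⟪Δ w x, v⟫_ℝ = fderiv ℝ V (w x) v)
    (hgrad_int : Integrable (gradNormSq w) μ) (hpot_int : Integrable (fun x => V (w x)) μ) :
    (finrank ℝ E - 2 : ℝ) * ∫ x, gradNormSq w x ∂μ + 2 * finrank ℝ E * ∫ x, V (w x) ∂μ = 0 := by
  set e := stdOrthonormalBasis ℝ E
  have hT_int (u : E) : Integrable (stressEnergy V w u) μ :=
    integrable_stressEnergy (hw.of_le one_le_two) hgrad_int hpot_int u
  have hT_div (u x : E) : divergence (stressEnergy V w u) x = 0 := by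
    rw [divergence_stressEnergy hV hw, hEL, sub_self]
  have hmean (u : E) : ∫ x, stressEnergy V w u x ∂μ = 0 :=
    integral_eq_zero_of_divergence_eq_zero (contDiff_stressEnergy hV hw u) (hT_int u) (hT_div u)
  have htrace : ∫ x, ∑ i, ⟪e i, stressEnergy V w (e i) x⟫_ℝ ∂μ = 0 := by
    rw [integral_finsetSum _ fun i _ => (hT_int (e i)).const_inner (e i)]
    simp [integral_inner (hT_int _), hmean]
  simp_rw [sum_inner_stressEnergy] at htrace
  have hdensity_int : Integrable (energyDensity V w) μ := (hgrad_int.div_const 2).add hpot_int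
  rw [integral_sub hgrad_int (hdensity_int.const_mul _), integral_const_mul] at htrace
  unfold energyDensity at htrace
  rw [integral_add (hgrad_int.div_const 2) hpot_int, integral_div] at htrace
  linarith

theorem potential_comp_eq_zero (hdim : 2 ≤ finrank ℝ E) (hV : ContDiff ℝ 1 V)
    (hV_nonneg : ∀ y, 0 ≤ V y) (hw : ContDiff ℝ 2 w)
    (hEL : ∀ x v, ⟪Δ w x, v⟫_ℝ = fderiv ℝ V (w x) v)
    (hgrad_int : Integrable (gradNormSq w) μ) (hpot_int : Integrable (fun x => V (w x)) μ) (x : E) :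
    V (w x) = 0 := by
  have hdim' : (2 : ℝ) ≤ finrank ℝ E := mod_cast hdim
  have hgrad_nonneg : 0 ≤ ∫ x, gradNormSq w x ∂μ := integral_nonneg (gradNormSq_nonneg w)
  have hpot_nonneg : 0 ≤ ∫ x, V (w x) ∂μ := integral_nonneg fun x => hV_nonneg (w x)
  have hpot_integral : ∫ x, V (w x) ∂μ = 0 := by
    have hpohozaev := pohozaev_identity hV hw hEL hgrad_int hpot_int
    nlinarith [mul_nonneg (sub_nonneg.mpr hdim') hgrad_nonneg]
  have hpot_ae := (integral_eq_zero_iff_of_nonneg (fun x => hV_nonneg (w x)) hpot_int).mp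
    hpot_integral
  exact congrFun ((Continuous.ae_eq_iff_eq μ (hV.continuous.comp hw.continuous)
    continuous_zero).mp hpot_ae) x

end StressEnergy

section GinzburgLandau

variable {F : Type*} [NormedAddCommGroup F]

/-- The Ginzburg–Landau double-well potential `γ² (1 - ‖y‖²)² / 4`, normalized so that
`Δw = ∇V(w)` is the Ginzburg–Landau equation. -/
def glPotential (γ : ℝ) (y : F) : ℝ :=
  γ ^ 2 / 4 * (1 - ‖y‖ ^ 2) ^ 2

lemma glPotential_nonneg (γ : ℝ) (y : F) : 0 ≤ glPotential γ y := by
  unfold glPotential; positivity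

lemma glPotential_eq_zero_iff {γ : ℝ} (hγ : γ ≠ 0) {y : F} :
    glPotential γ y = 0 ↔ ‖y‖ ^ 2 = 1 := by
  rw [glPotential, mul_eq_zero_iff_left (by positivity), sq_eq_zero_iff, sub_eq_zero, eq_comm]

variable [InnerProductSpace ℝ F]

lemma contDiff_glPotential (γ : ℝ) : ContDiff ℝ 1 (glPotential γ : F → ℝ) :=
  contDiff_const.mul ((contDiff_const.sub (contDiff_norm_sq ℝ)).pow 2)

lemma fderiv_glPotential_apply (γ : ℝ) (y v : F) :
    fderiv ℝ (glPotential γ) y v = -(γ ^ 2 * (1 - ‖y‖ ^ 2)) * ⟪y, v⟫_ℝ := by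
  have hderiv : HasFDerivAt (glPotential γ : F → ℝ) _ y :=
    (((hasFDerivAt_id y).norm_sq.const_sub 1).pow 2).const_mul (γ ^ 2 / 4)
  simp only [hderiv.fderiv, id_eq, Nat.add_one_sub_one, pow_one, nsmul_eq_mul, Nat.cast_ofNat,
    ContinuousLinearMap.comp_id, smul_neg, neg_apply, smul_apply, coe_innerSL_apply, smul_eq_mul,
    neg_mul, neg_inj]
  ring

variable {E : Type*} [NormedAddCommGroup E] [InnerProductSpace ℝ E] [FiniteDimensional ℝ E]
  [MeasurableSpace E] [BorelSpace E]

lemma integrable_of_lintegral_energy_lt_top {μ : Measure E} {γ : ℝ} {w : E → F}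
    (hw : ContDiff ℝ 2 w) (henergy : ∫⁻ x, ENNReal.ofReal
      (1 / 2 * gradNormSq w x + γ ^ 2 * (1 - ‖w x‖ ^ 2) ^ 2) ∂μ < ⊤) :
    Integrable (gradNormSq w) μ ∧ Integrable (fun x => glPotential γ (w x)) μ := by
  have hgrad_meas : AEStronglyMeasurable (gradNormSq w) μ :=
    (contDiff_gradNormSq hw).continuous.aestronglyMeasurable
  have hgrad_nonneg (x : E) : 0 ≤ 1 / 2 * gradNormSq w x :=
    mul_nonneg one_half_pos.le (gradNormSq_nonneg w x)
  have hpot_cont : Continuous fun x => glPotential γ (w x) :=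
    (contDiff_glPotential γ).continuous.comp hw.continuous
  have hpot_nonneg (x : E) : 0 ≤ 4 * glPotential γ (w x) :=
    mul_nonneg zero_le_four (glPotential_nonneg γ (w x))
  have hpot_eq (x : E) : γ ^ 2 * (1 - ‖w x‖ ^ 2) ^ 2 = 4 * glPotential γ (w x) := by
    unfold glPotential; ring
  simp_rw [hpot_eq] at henergy
  have hsum := (lintegral_ofReal_ne_top_iff_integrable
    ((hgrad_meas.const_mul _).add (hpot_cont.const_mul _).aestronglyMeasurable)
    (.of_forall fun x => add_nonneg (hgrad_nonneg x) (hpot_nonneg x))).mp henergy.ne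
  obtain ⟨hgrad_int, hpot_int⟩ := (integrable_add_iff_of_nonneg (hgrad_meas.const_mul _)
    (.of_forall hgrad_nonneg) (.of_forall hpot_nonneg)).mp hsum
  exact ⟨(integrable_const_mul_iff (by norm_num) _).mp hgrad_int,
    (integrable_const_mul_iff (by norm_num) _).mp hpot_int⟩

theorem stmt_6_general (μ : Measure E) [μ.IsAddHaarMeasure]
    (hdim : 2 ≤ finrank ℝ E) {γ : ℝ} (hγ : γ ≠ 0) {w : E → F} (hw : ContDiff ℝ 2 w)
    (heq : ∀ x, -Δ w x = (γ ^ 2 * (1 - ‖w x‖ ^ 2)) • w x)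
    (henergy : ∫⁻ x, ENNReal.ofReal
      (1 / 2 * gradNormSq w x + γ ^ 2 * (1 - ‖w x‖ ^ 2) ^ 2) ∂μ < ⊤) (x y : E) :
    w x = w y := by
  have hEL (x : E) (v : F) : ⟪Δ w x, v⟫_ℝ = fderiv ℝ (glPotential γ) (w x) v := by
    rw [fderiv_glPotential_apply, neg_eq_iff_eq_neg.mp (heq x), inner_neg_left,
      real_inner_smul_left, neg_mul]
  obtain ⟨hgrad_int, hpot_int⟩ := integrable_of_lintegral_energy_lt_top hw henergy
  have hnorm (x : E) : ‖w x‖ ^ 2 = 1 := (glPotential_eq_zero_iff hγ).mp <|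
    potential_comp_eq_zero hdim (contDiff_glPotential γ) (glPotential_nonneg γ) hw hEL
      hgrad_int hpot_int x
  have hharmonic (x : E) : Δ w x = 0 := by simpa [hnorm] using heq x
  refine is_const_of_fderiv_eq_zero (𝕜 := ℝ) (hw.differentiable two_ne_zero) (fun z => ?_) x y
  apply fderiv_eq_zero_of_gradNormSq_eq_zero
  rw [gradNormSq_eq_neg_inner_laplacian hw hnorm, hharmonic, inner_zero_right, neg_zero]

end GinzburgLandau

section Plane

lemma lap2m_eq_laplacian {m : ℕ} {w : EuclideanSpace ℝ (Fin 2) → EuclideanSpace ℝ (Fin m)}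
    (hw : ContDiff ℝ 2 w) (x : EuclideanSpace ℝ (Fin 2)) : lap2m m w x = Δ w x := by
  simp [lap2m, E2, (hasFDerivAt_fderiv_apply hw _ x).fderiv,
    laplacian_eq_sum_fderiv_fderiv (EuclideanSpace.basisFun (Fin 2) ℝ)]

lemma gradSq2m_eq_gradNormSq (m : ℕ) (w : EuclideanSpace ℝ (Fin 2) → EuclideanSpace ℝ (Fin m))
    (x : EuclideanSpace ℝ (Fin 2)) : gradSq2m m w x = gradNormSq w x := by
  simp [gradSq2m, E2, gradNormSq_eq_sum (EuclideanSpace.basisFun (Fin 2) ℝ),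
    EuclideanSpace.norm_sq_eq]

end Plane

/-- Liouville theorem for the Ginzburg–Landau equation on the plane: a smooth entire
solution of `−Δw = γ²(1 − ‖w‖²)w` with finite energy
`∫ [½|∇w|² + γ²(1 − ‖w‖²)²] < ∞` is constant. -/
theorem stmt_6 (γ : ℝ) (hγ : 0 < γ) (m : ℕ) (hm : 1 ≤ m)
    (w : EuclideanSpace ℝ (Fin 2) → EuclideanSpace ℝ (Fin m))
    (hw : ContDiff ℝ (⊤ : ℕ∞) w)
    (heq : ∀ x, -lap2m m w x = (γ ^ 2 * (1 - ‖w x‖ ^ 2)) • w x)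
    (henergy : (∫⁻ x : EuclideanSpace ℝ (Fin 2), ENNReal.ofReal
        ((1 / 2) * gradSq2m m w x + γ ^ 2 * (1 - ‖w x‖ ^ 2) ^ 2)) < ⊤) :
    ∀ x y, w x = w y := by
  have hw2 : ContDiff ℝ 2 w := contDiff_infty.mp hw 2
  simp_rw [lap2m_eq_laplacian hw2] at heq
  simp_rw [gradSq2m_eq_gradNormSq] at henergy
  exact stmt_6_general volume (by simp) hγ.ne' hw2 heq henergy

end
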